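/- In the endomorphism ring of R, the Casimir operator of the 𝔰𝔩₂-triple (H, X⁺, X⁻) satisfies: H² + 2(X⁺X⁻ + X⁻X⁺) = H² − 2H + 4X⁺X⁻ = H² + 2H + 4X⁻X⁺, and this operator equals (E_x − E_y)² + (p−q)(E_x − E_y) − 2(E_x + E_y) − ( r_x²·r_y² + r_x²·Δ_x + r_y²·Δ_y + Δ_x·Δ_y ) + ( (p−q)²/4 − (p+q) )·id. -/

import Mathlib

noncomputable section

/-- The polynomial ring `ℂ[x₁,…,x_p, y₁,…,y_q]`. -/
abbrev Rpq (p q : ℕ) := MvPolynomial (Fin p ⊕ Fin q) ℂ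

/-- Multiplication by `x_i`. -/
def xop (p q : ℕ) (i : Fin p) : Module.End ℂ (Rpq p q) :=
  LinearMap.mulLeft ℂ (MvPolynomial.X (Sum.inl i))

/-- Multiplication by `y_j`. -/
def yop (p q : ℕ) (j : Fin q) : Module.End ℂ (Rpq p q) :=
  LinearMap.mulLeft ℂ (MvPolynomial.X (Sum.inr j))

/-- The partial derivative `∂_{x_i}`. -/
def dx (p q : ℕ) (i : Fin p) : Module.End ℂ (Rpq p q) :=
  (MvPolynomial.pderiv (Sum.inl i)).toLinearMap

/-- The partial derivative `∂_{y_j}`. -/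
def dy (p q : ℕ) (j : Fin q) : Module.End ℂ (Rpq p q) :=
  (MvPolynomial.pderiv (Sum.inr j)).toLinearMap

/-- The Euler operator `E_x = Σ_i x_i ∂_{x_i}`. -/
def Eop_x (p q : ℕ) : Module.End ℂ (Rpq p q) := ∑ i : Fin p, xop p q i * dx p q i

/-- The Euler operator `E_y = Σ_j y_j ∂_{y_j}`. -/
def Eop_y (p q : ℕ) : Module.End ℂ (Rpq p q) := ∑ j : Fin q, yop p q j * dy p q j

/-- Multiplication by `r_x² = Σ_i x_i²`. -/
def rx2 (p q : ℕ) : Module.End ℂ (Rpq p q) :=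
  LinearMap.mulLeft ℂ (∑ i : Fin p, MvPolynomial.X (Sum.inl i) ^ 2)

/-- Multiplication by `r_y² = Σ_j y_j²`. -/
def ry2 (p q : ℕ) : Module.End ℂ (Rpq p q) :=
  LinearMap.mulLeft ℂ (∑ j : Fin q, MvPolynomial.X (Sum.inr j) ^ 2)

/-- The Laplacian `Δ_x = Σ_i ∂_{x_i}²`. -/
def Δx (p q : ℕ) : Module.End ℂ (Rpq p q) := ∑ i : Fin p, dx p q i * dx p q i

/-- The Laplacian `Δ_y = Σ_j ∂_{y_j}²`. -/
def Δy (p q : ℕ) : Module.End ℂ (Rpq p q) := ∑ j : Fin q, dy p q j * dy p q j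

/-- `H = −E_x − (p/2)·id + E_y + (q/2)·id`. -/
def Hop (p q : ℕ) : Module.End ℂ (Rpq p q) :=
  -Eop_x p q - ((p : ℂ) / 2) • 1 + Eop_y p q + ((q : ℂ) / 2) • 1

/-- `X⁺ = −(1/2)(Δ_x + r_y²)`. -/
def Xplus (p q : ℕ) : Module.End ℂ (Rpq p q) :=
  -((1 : ℂ) / 2) • (Δx p q + ry2 p q)

/-- `X⁻ = (1/2)(r_x² + Δ_y)`. -/
def Xminus (p q : ℕ) : Module.End ℂ (Rpq p q) :=
  ((1 : ℂ) / 2) • (rx2 p q + Δy p q)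

/-- The matrix `I_{p,q} = diag(1_p, −1_q)` over `ℂ`. -/
def IpqC (p q : ℕ) : Matrix (Fin (p + q)) (Fin (p + q)) ℂ :=
  Matrix.diagonal (fun i => if (i : ℕ) < p then 1 else -1)

end

theorem aux_comm {A ι : Type*} [Ring A] [Fintype ι] [DecidableEq ι] (a d : ι → A)
    (h : ∀ i j, d i * a j = a j * d i + if i = j then 1 else 0) :
    (∑ i, d i * d i) * (∑ j, a j * a j) =
      (∑ j, a j * a j) * (∑ i, d i * d i) + 4 * (∑ i, a i * d i) + 2 * (Fintype.card ι : A) := by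
  have key : ∀ i j, (d i * d i) * (a j * a j) = (a j * a j) * (d i * d i) +
      if i = j then 4 * (a i * d i) + 2 else 0 := by
    intro i j
    have h1 := h i j
    split_ifs at h1 ⊢ with hij
    · subst hij
      have h2 : d i * a i = a i * d i + 1 := h1
      have e1 : d i * (a i * a i) = a i * a i * d i + 2 * a i := by
        rw [← mul_assoc, h2, add_mul, mul_assoc, h2]; noncomm_ring
      calc (d i * d i) * (a i * a i) = d i * (d i * (a i * a i)) := by rw [mul_assoc]
        _ = (d i * (a i * a i)) * d i + 2 * (d i * a i) := by
            nth_rewrite 1 [e1]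
            rw [mul_add]; noncomm_ring
        _ = _ := by rw [e1, h2]; noncomm_ring; simp
    · have c : Commute (d i) (a j) := by simpa [Commute, SemiconjBy] using h1
      rw [add_zero]
      exact ((c.mul_left c).mul_right (c.mul_left c))
  rw [Finset.sum_mul_sum]
  simp_rw [key, Finset.sum_add_distrib]
  rw [Finset.sum_mul_sum, Finset.sum_comm, add_assoc]
  congr 1
  simp [Finset.sum_add_distrib, Finset.mul_sum, mul_comm]
  exact (Nat.cast_commute _ _).eq

theorem rx2_eq (p q : ℕ) : rx2 p q = ∑ i, xop p q i * xop p q i := by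
  apply LinearMap.ext
  intro f
  simp [rx2, xop, LinearMap.sum_apply, Finset.sum_mul, pow_two, mul_assoc]

theorem ry2_eq (p q : ℕ) : ry2 p q = ∑ i, yop p q i * yop p q i := by
  apply LinearMap.ext
  intro f
  simp [ry2, yop, LinearMap.sum_apply, Finset.sum_mul, pow_two, mul_assoc]

theorem dxx (p q : ℕ) (i j : Fin p) :
    dx p q i * xop p q j = xop p q j * dx p q i + if i = j then 1 else 0 := by
  apply LinearMap.ext
  intro f
  by_cases h : i = j
  · subst h
    simp [dx, xop, add_comm]
  · have : (Sum.inl j : Fin p ⊕ Fin q) ≠ Sum.inl i := fun e => h (Sum.inl.inj e).symm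
    simp [dx, xop, h, MvPolynomial.pderiv_X_of_ne this]

theorem dyy (p q : ℕ) (i j : Fin q) :
    dy p q i * yop p q j = yop p q j * dy p q i + if i = j then 1 else 0 := by
  apply LinearMap.ext
  intro f
  by_cases h : i = j
  · subst h
    simp [dy, yop, add_comm]
  · have : (Sum.inr j : Fin p ⊕ Fin q) ≠ Sum.inr i := fun e => h (Sum.inr.inj e).symm
    simp [dy, yop, h, MvPolynomial.pderiv_X_of_ne this]

theorem comm_dx_y (p q : ℕ) (i : Fin p) (j : Fin q) : Commute (dx p q i) (yop p q j) := by
  apply LinearMap.ext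
  intro f
  simp [dx, yop, MvPolynomial.pderiv_X_of_ne]

theorem comm_dy_x (p q : ℕ) (i : Fin q) (j : Fin p) : Commute (dy p q i) (xop p q j) := by
  apply LinearMap.ext
  intro f
  simp [dy, xop, MvPolynomial.pderiv_X_of_ne]

theorem comm_dx_dy (p q : ℕ) (i : Fin p) (j : Fin q) : Commute (dx p q i) (dy p q j) := by
  apply LinearMap.ext
  intro f
  have h : ⁅(MvPolynomial.pderiv (Sum.inl i) : Derivation ℂ (Rpq p q) (Rpq p q)),
      (MvPolynomial.pderiv (Sum.inr j) : Derivation ℂ (Rpq p q) (Rpq p q))⁆ = 0 := by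
    apply MvPolynomial.derivation_ext
    intro k
    rcases k with k | k <;>
      simp [Derivation.commutator_apply, MvPolynomial.pderiv_X, Pi.single_apply, apply_ite]
  have h2 := congrArg (fun D : Derivation ℂ (Rpq p q) (Rpq p q) => D f) h
  simpa [Derivation.commutator_apply, sub_eq_zero, dx, dy] using h2

theorem comm_x_y (p q : ℕ) (i : Fin p) (j : Fin q) : Commute (xop p q i) (yop p q j) := by
  apply LinearMap.ext
  intro f
  simp [xop, yop, mul_left_comm]

theorem comm_sq {A ι κ : Type*} [Ring A] [Fintype ι] [Fintype κ] (a : ι → A) (b : κ → A)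
    (h : ∀ i j, Commute (a i) (b j)) : Commute (∑ i, a i * a i) (∑ j, b j * b j) := by
  refine Commute.sum_left _ _ _ fun i _ => Commute.sum_right _ _ _ fun j _ => ?_
  exact ((h i j).mul_left (h i j)).mul_right ((h i j).mul_left (h i j))

theorem aux_final {A : Type*} [Ring A] [Algebra ℂ A] (p q : ℂ) (Ex Ey rx ry Dx Dy : A)
    (hx : Dx * rx = rx * Dx + (4 : ℂ) • Ex + (2 * p) • 1)
    (hy : Dy * ry = ry * Dy + (4 : ℂ) • Ey + (2 * q) • 1)
    (h1 : Dx * Dy = Dy * Dx) (h2 : ry * rx = rx * ry) (h3 : Dx * ry = ry * Dx)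
    (h4 : Dy * rx = rx * Dy)
    (H Xp Xm : A) (hH : H = -Ex - (p / 2) • 1 + Ey + (q / 2) • 1)
    (hXp : Xp = -((1 : ℂ) / 2) • (Dx + ry)) (hXm : Xm = ((1 : ℂ) / 2) • (rx + Dy)) :
    H ^ 2 + (2 : ℂ) • (Xp * Xm + Xm * Xp) = H ^ 2 - (2 : ℂ) • H + (4 : ℂ) • (Xp * Xm) ∧
    H ^ 2 + (2 : ℂ) • (Xp * Xm + Xm * Xp) = H ^ 2 + (2 : ℂ) • H + (4 : ℂ) • (Xm * Xp) ∧
    H ^ 2 + (2 : ℂ) • (Xp * Xm + Xm * Xp) =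
      (Ex - Ey) ^ 2 + (p - q) • (Ex - Ey) - (2 : ℂ) • (Ex + Ey)
        - (rx * ry + rx * Dx + ry * Dy + Dx * Dy) + ((p - q) ^ 2 / 4 - (p + q)) • 1 := by
  have hc : Xp * Xm = Xm * Xp + H := by
    rw [hXp, hXm, hH]
    simp only [smul_mul_assoc, mul_smul_comm, mul_add, add_mul, hx, hy, h1, h2]
    module
  have hsq : H ^ 2 = (Ex - Ey) ^ 2 + (p - q) • (Ex - Ey) + ((p - q) ^ 2 / 4) • 1 := by
    have : H = -(Ex - Ey) - ((p - q) / 2) • 1 := by rw [hH]; module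
    rw [this]
    simp only [pow_two, sub_mul, mul_sub, neg_mul, mul_neg, smul_mul_assoc, mul_smul_comm,
      one_mul, mul_one]
    module
  have hb : H ^ 2 + (2 : ℂ) • (Xp * Xm + Xm * Xp) = H ^ 2 + (2 : ℂ) • H + (4 : ℂ) • (Xm * Xp) := by
    rw [hc]; module
  refine ⟨?_, hb, ?_⟩
  · rw [hc]; module
  · rw [hb, hsq, hXp, hXm, hH]
    simp only [smul_mul_assoc, mul_smul_comm, mul_add, add_mul, hy, h1]
    module

theorem stmt_6 (p q : ℕ) (hp : 1 ≤ p) (hq : 1 ≤ q) :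
    Hop p q ^ 2 + (2 : ℂ) • (Xplus p q * Xminus p q + Xminus p q * Xplus p q) =
      Hop p q ^ 2 - (2 : ℂ) • Hop p q + (4 : ℂ) • (Xplus p q * Xminus p q) ∧
    Hop p q ^ 2 + (2 : ℂ) • (Xplus p q * Xminus p q + Xminus p q * Xplus p q) =
      Hop p q ^ 2 + (2 : ℂ) • Hop p q + (4 : ℂ) • (Xminus p q * Xplus p q) ∧
    Hop p q ^ 2 + (2 : ℂ) • (Xplus p q * Xminus p q + Xminus p q * Xplus p q) =
      (Eop_x p q - Eop_y p q) ^ 2 + ((p : ℂ) - (q : ℂ)) • (Eop_x p q - Eop_y p q)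
        - (2 : ℂ) • (Eop_x p q + Eop_y p q)
        - (rx2 p q * ry2 p q + rx2 p q * Δx p q + ry2 p q * Δy p q + Δx p q * Δy p q)
        + (((p : ℂ) - (q : ℂ)) ^ 2 / 4 - ((p : ℂ) + (q : ℂ))) • 1 := by
  have hx := aux_comm (xop p q) (dx p q) (dxx p q)
  have hy := aux_comm (yop p q) (dy p q) (dyy p q)
  rw [← rx2_eq] at hx
  rw [← ry2_eq] at hy
  refine aux_final (p : ℂ) (q : ℂ) (Eop_x p q) (Eop_y p q) (rx2 p q) (ry2 p q) (Δx p q) (Δy p q)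
    ?_ ?_ ?_ ?_ ?_ ?_ _ _ _ rfl rfl rfl
  · refine hx.trans ?_
    simp only [Δx, Eop_x, Fintype.card_fin, Algebra.smul_def, map_mul, map_ofNat, map_natCast,
      mul_one]
  · refine hy.trans ?_
    simp only [Δy, Eop_y, Fintype.card_fin, Algebra.smul_def, map_mul, map_ofNat, map_natCast,
      mul_one]
  · exact comm_sq _ _ (comm_dx_dy p q)
  · rw [rx2_eq, ry2_eq]
    exact (comm_sq _ _ (comm_x_y p q)).symm
  · rw [ry2_eq]
    exact comm_sq _ _ (comm_dx_y p q)
  · rw [rx2_eq]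
    exact comm_sq _ _ (comm_dy_x p q)
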